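/- arXiv:math/9510203 — 2 statements merged into one kernel-verified Lean document; each statement's English description precedes it below -/
import Mathlib

section
/- Let n be a positive integer, let A₀, B₀, C ⊂ ℝⁿ be measurable sets of finite Lebesgue measure, and let ρ₁, ρ₂, R > 0 be defined by λ(A₀) = λ(ρ₁Bⁿ), λ(B₀) = λ(ρ₂Bⁿ), λ(C) = λ(RBⁿ). Then λ({ (x, y) ∈ A₀ × B₀ : x + y ∈ C }) ≤ λ({ (x, y) ∈ ρ₁Bⁿ × ρ₂Bⁿ : x + y ∈ RBⁿ }); equivalently, ∫∫ χ_{A₀}(x) χ_{B₀}(y) χ_C(x + y) dx dy ≤ ∫∫ χ_{ρ₁Bⁿ}(x) χ_{ρ₂Bⁿ}(y) χ_{RBⁿ}(x + y) dx dy. -/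
open MeasureTheory

/-!
On the line, cutting `A` and `B` at suitable points bounds the measure of
`{(x, y) ∈ A × B : x + y ∈ C}` by a quantity that depends only on the lengths of the three sets and
that centred intervals attain for a suitable choice of the cuts. Applied to the sections by
parallel lines, this shows that Steiner symmetrization of all three sets in a common direction does
not decrease the measure.

The three sets come arbitrarily close to the balls under finitely many symmetrizations. If some set
`S` of at most the volume of its ball `K` leaves a definite part of its volume outside `K`, then
`S \ K` and `K \ S` overlap substantially after some translation `v`, and symmetrizing in the
direction of `v` reduces the total volume outside the balls by at least that overlap; near the
infimum of this total volume over all finite sequences of directions, this is impossible.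
-/

open Metric Set
open scoped ENNReal RealInnerProductSpace

section AddTriples

variable {G : Type*}

/-- The pairs `(x, y) ∈ A × B` with `x + y ∈ C`. -/
def addTriples [Add G] (A B C : Set G) : Set (G × G) :=
  {p | p.1 ∈ A ∧ p.2 ∈ B ∧ p.1 + p.2 ∈ C}

theorem addTriples_mono [Add G] {A A' B B' C C' : Set G} (hA : A ⊆ A') (hB : B ⊆ B')
    (hC : C ⊆ C') : addTriples A B C ⊆ addTriples A' B' C' :=
  fun _ hp => ⟨hA hp.1, hB hp.2.1, hC hp.2.2⟩

variable [MeasurableSpace G]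

theorem measurableSet_addTriples [Add G] [MeasurableAdd₂ G] {A B C : Set G}
    (hA : MeasurableSet A) (hB : MeasurableSet B) (hC : MeasurableSet C) :
    MeasurableSet (addTriples A B C) :=
  (measurable_fst hA).inter ((measurable_snd hB).inter (measurable_add hC))

theorem measure_addTriples_ne_top [Add G] {μ ν : Measure G} [SFinite ν] {A B C : Set G}
    (hA : μ A ≠ ⊤) (hB : ν B ≠ ⊤) : μ.prod ν (addTriples A B C) ≠ ⊤ := by
  have hsub : addTriples A B C ⊆ A ×ˢ B := fun p hp => ⟨hp.1, hp.2.1⟩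
  refine measure_ne_top_of_subset hsub ?_
  rw [Measure.prod_prod]
  exact ENNReal.mul_ne_top hA hB

theorem prod_apply_eq_lintegral_sub [AddGroup G] [MeasurableAdd₂ G] [MeasurableNeg G]
    (μ ν : Measure G) [SFinite μ] [SFinite ν] [ν.IsAddRightInvariant] {T : Set (G × G)}
    (hT : MeasurableSet T) : μ.prod ν T = ∫⁻ z, μ {x | (x, z - x) ∈ T} ∂ν := by
  have hshear := measurePreserving_prod_sub μ ν
  rw [← hshear.measure_preimage hT.nullMeasurableSet,
    Measure.prod_apply_symm (hshear.measurable hT)]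
  rfl

theorem measure_addTriples_le_add [AddGroup G] [MeasurableAdd₂ G] (μ : Measure G) [SFinite μ]
    [μ.IsAddLeftInvariant] {A C J : Set G} (B K L : Set G) (hA : MeasurableSet A)
    (hC : MeasurableSet C) (hJ : MeasurableSet J) :
    μ.prod μ (addTriples A B C) ≤ μ.prod μ (addTriples K L J) +
      (μ (A \ K) * μ B + μ A * μ (B \ L) + μ A * μ (C \ J)) := by
  have hcover : addTriples A B C ⊆ addTriples K L J ∪
      ((A \ K) ×ˢ B ∪ A ×ˢ (B \ L) ∪ {p | p.1 ∈ A ∧ p.1 + p.2 ∈ C \ J}) := by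
    rintro p ⟨hpA, hpB, hpC⟩
    by_cases hK : p.1 ∈ K
    · by_cases hL : p.2 ∈ L
      · by_cases hJ : p.1 + p.2 ∈ J
        · exact .inl ⟨hK, hL, hJ⟩
        · exact .inr (.inr ⟨hpA, hpC, hJ⟩)
      · exact .inr (.inl (.inr ⟨hpA, hpB, hL⟩))
    · exact .inr (.inl (.inl ⟨⟨hpA, hK⟩, hpB⟩))
  have hshear : μ.prod μ {p | p.1 ∈ A ∧ p.1 + p.2 ∈ C \ J} = μ A * μ (C \ J) := by
    rw [← Measure.prod_prod]
    exact (measurePreserving_prod_add μ μ).measure_preimage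
      (hA.prod (hC.diff hJ)).nullMeasurableSet
  grw [hcover, measure_union_le, measure_union_le, measure_union_le, Measure.prod_prod,
    Measure.prod_prod, hshear]

theorem measure_addTriples_le_of_forall_inter_closedBall {E : Type*} [SeminormedAddGroup E]
    [MeasurableSpace E] (μ : Measure (E × E)) {A B C : Set E} {b : ℝ≥0∞}
    (h : ∀ r : ℝ, μ (addTriples (A ∩ closedBall 0 r) (B ∩ closedBall 0 r)
      (C ∩ closedBall 0 r)) ≤ b) : μ (addTriples A B C) ≤ b := by
  let T : ℕ → Set (E × E) := fun m =>
    addTriples (A ∩ closedBall 0 m) (B ∩ closedBall 0 m) (C ∩ closedBall 0 m)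
  have hT : Monotone T := fun m m' hm => by
    have hball : closedBall (0 : E) m ⊆ closedBall 0 m' :=
      closedBall_subset_closedBall (by exact_mod_cast hm)
    apply addTriples_mono <;> gcongr
  have hunion : addTriples A B C ⊆ ⋃ m, T m := by
    rintro p ⟨hpA, hpB, hpC⟩
    obtain ⟨m, hm⟩ := exists_nat_ge (‖p.1‖ + ‖p.2‖)
    refine mem_iUnion.2 ⟨m, ⟨hpA, ?_⟩, ⟨hpB, ?_⟩, ⟨hpC, ?_⟩⟩ <;> rw [mem_closedBall_zero_iff] <;>
      linarith [norm_nonneg p.1, norm_nonneg p.2, norm_add_le p.1 p.2]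
  grw [hunion, hT.measure_iUnion]
  exact iSup_le fun m => h m

theorem integral_integral_indicator_mul_indicator_add [AddGroup G] [MeasurableAdd₂ G]
    (μ : Measure G) [SFinite μ] [μ.IsAddLeftInvariant] {A B C : Set G}
    (hA : NullMeasurableSet A μ) (hB : NullMeasurableSet B μ) (hC : NullMeasurableSet C μ)
    (hAfin : μ A ≠ ⊤) (hBfin : μ B ≠ ⊤) :
    ∫ x, ∫ y, A.indicator (fun _ => (1 : ℝ)) x * B.indicator (fun _ => (1 : ℝ)) y *
      C.indicator (fun _ => (1 : ℝ)) (x + y) ∂μ ∂μ = (μ.prod μ).real (addTriples A B C) := by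
  have hT : NullMeasurableSet (addTriples A B C) (μ.prod μ) :=
    (hA.preimage Measure.quasiMeasurePreserving_fst).inter
      ((hB.preimage Measure.quasiMeasurePreserving_snd).inter
        (hC.preimage (quasiMeasurePreserving_add μ μ)))
  have hint : Integrable ((addTriples A B C).indicator fun _ => (1 : ℝ)) (μ.prod μ) :=
    (integrableOn_const (measure_addTriples_ne_top hAfin hBfin)).integrable_indicator₀ hT
  have hind : ∀ x y, A.indicator (fun _ => (1 : ℝ)) x * B.indicator (fun _ => (1 : ℝ)) y *
      C.indicator (fun _ => (1 : ℝ)) (x + y) =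
        (addTriples A B C).indicator (fun _ => (1 : ℝ)) (x, y) := fun x y => by
    by_cases hx : x ∈ A <;> by_cases hy : y ∈ B <;> by_cases hz : x + y ∈ C <;>
      simp [addTriples, indicator, hx, hy, hz]
  simp_rw [hind]
  rw [← integral_prod _ hint, integral_indicator₀ hT, setIntegral_const, smul_eq_mul, mul_one]

end AddTriples

section Line

theorem continuous_volume_inter_Iic (A : Set ℝ) : Continuous fun x => volume (A ∩ Iic x) := by
  refine continuous_of_le_add_edist 1 ENNReal.one_ne_top fun x y => ?_
  have hcover : A ∩ Iic x ⊆ (A ∩ Iic y) ∪ Icc y x := fun s hs =>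
    (le_total s y).imp (fun h => ⟨hs.1, h⟩) (fun h => ⟨h, hs.2⟩)
  grw [hcover, measure_union_le, Real.volume_Icc, one_mul, edist_dist, Real.dist_eq,
    ← le_abs_self]

theorem exists_volume_inter_Iic_eq {A : Set ℝ} (hA : Bornology.IsBounded A) {t : ℝ≥0∞}
    (ht : t ≤ volume A) :
    ∃ a, volume (A ∩ Iic a) = t ∧ volume (A ∩ Ioi a) = volume A - t := by
  obtain ⟨r, hr⟩ := hA.subset_ball 0
  rw [Real.ball_eq_Ioo, zero_sub, zero_add] at hr
  have hlow : A ∩ Iic (-r) = ∅ :=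
    eq_empty_of_forall_notMem fun s hs => (hr hs.1).1.not_ge hs.2
  have hhigh : A ∩ Iic r = A := inter_eq_left.2 fun s hs => (hr hs).2.le
  obtain ⟨a, ha⟩ : t ∈ range fun x => volume (A ∩ Iic x) :=
    mem_range_of_exists_le_of_exists_ge (continuous_volume_inter_Iic A)
      ⟨-r, by simp [hlow]⟩ ⟨r, by rwa [hhigh]⟩
  refine ⟨a, ha, ENNReal.eq_sub_of_add_eq (ht.trans_lt hA.measure_lt_top).ne ?_⟩
  rw [← ha, add_comm, ← compl_Iic, ← sdiff_eq, measure_inter_add_sdiff A measurableSet_Iic]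

-- Cut `A` at `α` and `B` at `β` so that the upper part of `A` and the lower part of `B` have
-- measure `t`. Off the product of the lower part of `A` and the upper part of `B`, each
-- antidiagonal `x + y = z` meets `A × B` only over one of these two parts of measure `t`.
theorem volume_addTriples_le {A B C : Set ℝ} (hA : MeasurableSet A) (hB : MeasurableSet B)
    (hC : MeasurableSet C) (hAb : Bornology.IsBounded A) (hBb : Bornology.IsBounded B)
    {t : ℝ≥0∞} (htA : t ≤ volume A) (htB : t ≤ volume B) :
    volume (addTriples A B C) ≤ t * volume C + (volume A - t) * (volume B - t) := by
  obtain ⟨α, hAlow, hAhigh⟩ := exists_volume_inter_Iic_eq hAb (tsub_le_self (b := t))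
  obtain ⟨β, hBlow, hBhigh⟩ := exists_volume_inter_Iic_eq hBb htB
  rw [ENNReal.sub_sub_cancel hAb.measure_lt_top.ne htA] at hAhigh
  set Q := (A ∩ Iic α) ×ˢ (B ∩ Ioi β)
  have hQ : MeasurableSet Q := (hA.inter measurableSet_Iic).prod (hB.inter measurableSet_Ioi)
  have hfibre : ∀ z, volume {x | (x, z - x) ∈ addTriples A B C \ Q} ≤ t := fun z => by
    rcases le_or_gt z (α + β) with hz | hz
    · rw [← hBlow, ← (Measure.measurePreserving_sub_left volume z).measure_preimage
        (hB.inter measurableSet_Iic).nullMeasurableSet]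
      refine measure_mono fun x ⟨⟨hxA, hxB, _⟩, hxQ⟩ => ⟨hxB, ?_⟩
      exact mem_Iic.2 (not_lt.1 fun hlt => hxQ ⟨⟨hxA, mem_Iic.2 (by linarith)⟩, hxB, hlt⟩)
    · rw [← hAhigh]
      refine measure_mono fun x ⟨⟨hxA, hxB, _⟩, hxQ⟩ => ⟨hxA, ?_⟩
      exact mem_Ioi.2 (not_le.1 fun hle => hxQ ⟨⟨hxA, hle⟩, hxB, mem_Ioi.2 (by linarith)⟩)
  have hdiff : volume (addTriples A B C \ Q) ≤ t * volume C := by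
    rw [Measure.volume_eq_prod, prod_apply_eq_lintegral_sub _ _
      ((measurableSet_addTriples hA hB hC).diff hQ), ← setLIntegral_const,
      ← lintegral_indicator hC]
    refine lintegral_mono fun z => ?_
    by_cases hz : z ∈ C
    · simpa only [indicator_of_mem hz] using hfibre z
    · simp [addTriples, hz]
  rw [← measure_sdiff_add_inter _ hQ]
  grw [hdiff, inter_subset_right]
  rw [Measure.volume_eq_prod, Measure.prod_prod, hAlow, hBhigh]

-- For such `t`, centred intervals attain the bound of `volume_addTriples_le`.
theorem le_volume_addTriples_Ioo {a b c t : ℝ} (ht : 0 ≤ t) (hta : t ≤ a) (htb : t ≤ b)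
    (hcorner : t = a ∨ t = b ∨ a + b - c ≤ 2 * t) (hfibre : t = 0 ∨ 2 * t ≤ a + b - c) :
    ENNReal.ofReal t * ENNReal.ofReal c + ENNReal.ofReal (a - t) * ENNReal.ofReal (b - t) ≤
      volume (addTriples (Ioo (-(a / 2)) (a / 2)) (Ioo (-(b / 2)) (b / 2))
        (Ioo (-(c / 2)) (c / 2))) := by
  set T := addTriples (Ioo (-(a / 2)) (a / 2)) (Ioo (-(b / 2)) (b / 2)) (Ioo (-(c / 2)) (c / 2))
  set Q := Ioo (-(a / 2)) (a / 2 - t) ×ˢ Ioo (t - b / 2) (b / 2)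
  have hT : MeasurableSet T :=
    measurableSet_addTriples measurableSet_Ioo measurableSet_Ioo measurableSet_Ioo
  have hQ : MeasurableSet Q := measurableSet_Ioo.prod measurableSet_Ioo
  have hQvol : volume Q = ENNReal.ofReal (a - t) * ENNReal.ofReal (b - t) := by
    rw [Measure.volume_eq_prod, Measure.prod_prod, Real.volume_Ioo, Real.volume_Ioo]
    ring_nf
  have hQT : Q ⊆ T := by
    rintro ⟨x, y⟩ ⟨⟨hx, hx'⟩, hy, hy'⟩
    dsimp only at hx hx' hy hy'
    refine ⟨⟨?_, ?_⟩, ⟨?_, ?_⟩, ?_, ?_⟩ <;> dsimp only <;>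
    rcases hcorner with h | h | h <;> linarith
  have hdiff : ∀ z ∈ Ioo (-(c / 2)) (c / 2),
      ENNReal.ofReal t ≤ volume {x | (x, z - x) ∈ T \ Q} := fun z ⟨hz, hz'⟩ => by
    suffices h : ∃ p, Ioo p (p + t) ⊆ {x | (x, z - x) ∈ T \ Q} by
      obtain ⟨p, hp⟩ := h
      simpa using measure_mono (μ := volume) hp
    rcases le_or_gt z (a / 2 - b / 2) with h | h
    · refine ⟨z + b / 2 - t, fun x ⟨hx, hx'⟩ =>
        ⟨⟨⟨?_, ?_⟩, ⟨?_, ?_⟩, ?_, ?_⟩, fun hxQ => absurd hxQ.2.1 (not_lt.2 ?_)⟩⟩ <;>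
      dsimp only <;> rcases hfibre with h | h <;> linarith
    · refine ⟨a / 2 - t, fun x ⟨hx, hx'⟩ =>
        ⟨⟨⟨?_, ?_⟩, ⟨?_, ?_⟩, ?_, ?_⟩, fun hxQ => absurd hxQ.1.2 (not_lt.2 ?_)⟩⟩ <;>
      dsimp only <;> rcases hfibre with h | h <;> linarith
  calc ENNReal.ofReal t * ENNReal.ofReal c + ENNReal.ofReal (a - t) * ENNReal.ofReal (b - t)
      = (∫⁻ _ in Ioo (-(c / 2)) (c / 2), ENNReal.ofReal t) + volume Q := by
        rw [hQvol, setLIntegral_const, Real.volume_Ioo, sub_neg_eq_add, add_halves]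
    _ ≤ volume (T \ Q) + volume Q := by
        rw [Measure.volume_eq_prod, prod_apply_eq_lintegral_sub _ _ (hT.diff hQ)]
        grw [setLIntegral_mono' measurableSet_Ioo hdiff, setLIntegral_le_lintegral]
    _ = volume T := by
        rw [← measure_sdiff_add_inter T hQ, inter_eq_right.2 hQT]

/-- The open interval of length `a` centred at `0`, which is the whole line for `a = ⊤`. -/
def centeredInterval (a : ℝ≥0∞) : Set ℝ :=
  {s | ENNReal.ofReal (2 * |s|) < a}

theorem centeredInterval_mono : Monotone centeredInterval :=
  fun _ _ hab _ hs => LT.lt.trans_le hs hab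

theorem centeredInterval_inter_centeredInterval (a b : ℝ≥0∞) :
    centeredInterval a ∩ centeredInterval b = centeredInterval (min a b) := by
  ext s
  simp only [centeredInterval, mem_inter_iff, mem_ofPred_eq, lt_min_iff]

theorem centeredInterval_ofReal (c : ℝ) :
    centeredInterval (ENNReal.ofReal c) = Ioo (-(c / 2)) (c / 2) := by
  ext s
  rw [centeredInterval, mem_ofPred_eq, ENNReal.ofReal_lt_ofReal_iff_of_nonneg (by positivity),
    mem_Ioo, ← abs_lt, lt_div_iff₀' two_pos]

theorem volume_centeredInterval (a : ℝ≥0∞) : volume (centeredInterval a) = a := by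
  rcases eq_or_ne a ⊤ with rfl | ha
  · simp [centeredInterval, ENNReal.mul_lt_top]
  · rw [← ENNReal.ofReal_toReal ha, centeredInterval_ofReal, Real.volume_Ioo, sub_neg_eq_add,
      add_halves]

theorem volume_addTriples_le_centeredInterval_of_isBounded {A B C : Set ℝ}
    (hA : MeasurableSet A) (hB : MeasurableSet B) (hC : MeasurableSet C)
    (hAb : Bornology.IsBounded A) (hBb : Bornology.IsBounded B) (hCb : Bornology.IsBounded C) :
    volume (addTriples A B C) ≤ volume (addTriples (centeredInterval (volume A))
      (centeredInterval (volume B)) (centeredInterval (volume C))) := by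
  have hreal : ∀ {S : Set ℝ}, Bornology.IsBounded S →
      ∃ s, 0 ≤ s ∧ volume S = ENNReal.ofReal s := fun hS =>
    ⟨_, ENNReal.toReal_nonneg, (ENNReal.ofReal_toReal hS.measure_lt_top.ne).symm⟩
  obtain ⟨a, ha, hvolA⟩ := hreal hAb
  obtain ⟨b, hb, hvolB⟩ := hreal hBb
  obtain ⟨c, _, hvolC⟩ := hreal hCb
  obtain ⟨t, ht, hta, htb, hcorner, hfibre⟩ : ∃ t, 0 ≤ t ∧ t ≤ a ∧ t ≤ b ∧
      (t = a ∨ t = b ∨ a + b - c ≤ 2 * t) ∧ (t = 0 ∨ 2 * t ≤ a + b - c) := by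
    refine ⟨max 0 (min ((a + b - c) / 2) (min a b)), ?_⟩
    grind
  have hle := volume_addTriples_le hA hB hC hAb hBb (t := ENNReal.ofReal t)
    (hvolA ▸ ENNReal.ofReal_le_ofReal hta) (hvolB ▸ ENNReal.ofReal_le_ofReal htb)
  rw [hvolA, hvolB, hvolC, ← ENNReal.ofReal_sub _ ht, ← ENNReal.ofReal_sub _ ht] at hle
  simp only [hvolA, hvolB, hvolC, centeredInterval_ofReal]
  exact hle.trans (le_volume_addTriples_Ioo ht hta htb hcorner hfibre)

theorem volume_addTriples_le_centeredInterval {A B C : Set ℝ} (hA : MeasurableSet A)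
    (hB : MeasurableSet B) (hC : MeasurableSet C) :
    volume (addTriples A B C) ≤ volume (addTriples (centeredInterval (volume A))
      (centeredInterval (volume B)) (centeredInterval (volume C))) := by
  refine measure_addTriples_le_of_forall_inter_closedBall _ fun r => ?_
  have hinter : ∀ {S : Set ℝ}, MeasurableSet S → MeasurableSet (S ∩ closedBall 0 r) :=
    fun hS => hS.inter measurableSet_closedBall
  have hbdd : ∀ S : Set ℝ, Bornology.IsBounded (S ∩ closedBall 0 r) :=
    fun _ => isBounded_closedBall.subset inter_subset_right
  refine (volume_addTriples_le_centeredInterval_of_isBounded (hinter hA) (hinter hB) (hinter hC)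
    (hbdd A) (hbdd B) (hbdd C)).trans (measure_mono (addTriples_mono ?_ ?_ ?_)) <;>
  exact centeredInterval_mono (measure_mono inter_subset_left)

end Line

section Steiner

theorem prod_prod_apply_eq_lintegral_lintegral {X Y X' Y' : Type*} [MeasurableSpace X]
    [MeasurableSpace Y] [MeasurableSpace X'] [MeasurableSpace Y'] (μ : Measure X) (ν : Measure Y)
    (μ' : Measure X') (ν' : Measure Y') [SFinite ν] [SFinite μ'] [SFinite ν']
    {T : Set ((X × Y) × (X' × Y'))} (hT : MeasurableSet T) :
    (μ.prod ν).prod (μ'.prod ν') T =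
      ∫⁻ x, ∫⁻ x', ν.prod ν' {s | ((x, s.1), (x', s.2)) ∈ T} ∂μ' ∂μ := by
  rw [Measure.prod_apply hT, lintegral_prod _ (measurable_measure_prodMk_left hT).aemeasurable]
  refine lintegral_congr fun x => ?_
  have hswap : MeasurableSet {q : (Y × X') × Y' | ((x, q.1.1), (q.1.2, q.2)) ∈ T} :=
    (by fun_prop : Measurable fun q : (Y × X') × Y' => ((x, q.1.1), (q.1.2, q.2))) hT
  have hsection : ∀ x', MeasurableSet {s : Y × Y' | ((x, s.1), (x', s.2)) ∈ T} := fun x' =>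
    (by fun_prop : Measurable fun s : Y × Y' => ((x, s.1), (x', s.2))) hT
  simp_rw [Measure.prod_apply (measurable_prodMk_left hT), Measure.prod_apply (hsection _)]
  exact lintegral_lintegral_swap (measurable_measure_prodMk_left hswap).aemeasurable

variable {E : Type*} [NormedAddCommGroup E] [InnerProductSpace ℝ E]

/-- The section of `A` by the line `x + ℝ e`, parametrized by `s ↦ x + s • e`. -/
def slice (e : E) (A : Set E) (x : E) : Set ℝ :=
  {s | x + s • e ∈ A}

/-- The Steiner symmetrization of `A` with respect to the hyperplane orthogonal to the unit vector
`e`: its section by each line parallel to `e` is an open interval centred on that hyperplane, of the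
same length as the section of `A`. -/
def steiner (e : E) (A : Set E) : Set E :=
  {x | ⟪e, x⟫ ∈ centeredInterval (volume (slice e A x))}

theorem volume_slice_add_smul (e : E) (A : Set E) (x : E) (s : ℝ) :
    volume (slice e A (x + s • e)) = volume (slice e A x) := by
  rw [← measure_preimage_add volume s (slice e A x)]
  simp only [slice, preimage_ofPred_eq, add_smul, add_assoc]

theorem slice_steiner {e : E} (he : ‖e‖ = 1) (A : Set E) (y : (ℝ ∙ e)ᗮ) :
    slice e (steiner e A) y = centeredInterval (volume (slice e A y)) := by
  ext s
  have hcoord : ⟪e, y + s • e⟫ = s := by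
    rw [inner_add_right, inner_smul_right, real_inner_self_eq_norm_sq, he,
      Submodule.mem_orthogonal_singleton_iff_inner_right.1 y.2, one_pow, mul_one, zero_add]
  rw [slice, steiner, mem_ofPred_eq, mem_ofPred_eq, hcoord, volume_slice_add_smul]

theorem steiner_mono (e : E) {A B : Set E} (hAB : A ⊆ B) : steiner e A ⊆ steiner e B :=
  fun x hx => by
    have hslice : slice e A x ⊆ slice e B x := fun _ hs => hAB hs
    exact centeredInterval_mono (measure_mono hslice) hx

theorem steiner_closedBall_subset {e : E} (he : ‖e‖ = 1) (r : ℝ) :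
    steiner e (closedBall 0 r) ⊆ closedBall 0 r := by
  intro x hx
  by_contra hxr
  have hslice : slice e (closedBall 0 r) x ⊆
      Ioo (-⟪e, x⟫ - |⟪e, x⟫|) (-⟪e, x⟫ + |⟪e, x⟫|) := fun s hs => by
    have hlt : ‖x + s • e‖ ^ 2 < ‖x‖ ^ 2 := by
      gcongr
      exact (mem_closedBall_zero_iff.1 hs).trans_lt (by simpa using hxr)
    have hsq : (s + ⟪e, x⟫) ^ 2 < ⟪e, x⟫ ^ 2 := by
      rw [norm_add_sq_real, inner_smul_right, real_inner_comm, norm_smul, he, mul_one,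
        Real.norm_eq_abs, sq_abs] at hlt
      linarith
    obtain ⟨hlow, hhigh⟩ := abs_lt.1 (sq_lt_sq.1 hsq)
    constructor <;> linarith
  refine absurd hx.out (measure_mono hslice |>.trans_eq ?_).not_gt
  rw [Real.volume_Ioo, add_sub_sub_cancel, two_mul]

variable [MeasurableSpace E] [BorelSpace E]

theorem measurableSet_slice (e : E) {A : Set E} (hA : MeasurableSet A) (x : E) :
    MeasurableSet (slice e A x) :=
  (by fun_prop : Measurable fun s : ℝ => x + s • e) hA

theorem measurableSet_steiner [SecondCountableTopology E] (e : E) {A : Set E}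
    (hA : MeasurableSet A) : MeasurableSet (steiner e A) := by
  have hline : MeasurableSet {p : E × ℝ | p.1 + p.2 • e ∈ A} :=
    (by fun_prop : Measurable fun p : E × ℝ => p.1 + p.2 • e) hA
  exact measurableSet_lt (by fun_prop) (measurable_measure_prodMk_left hline)

variable [FiniteDimensional ℝ E] {e : E}

theorem measurePreserving_add_smul (he : ‖e‖ = 1) :
    MeasurePreserving (fun p : (ℝ ∙ e)ᗮ × ℝ => (p.1 : E) + p.2 • e)
      (volume.prod volume) volume := by
  have hline := (LinearIsometryEquiv.toSpanUnitSingleton e he).measurePreserving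
  have hdecomp := (ℝ ∙ e).orthogonalDecomposition.symm.measurePreserving.comp
    (WithLp.volume_preserving_toLp _ _)
  simpa [Function.comp_def, add_comm] using
    hdecomp.comp ((hline.prod (MeasurePreserving.id volume)).comp Measure.measurePreserving_swap)

theorem volume_eq_lintegral_slice (he : ‖e‖ = 1) {A : Set E} (hA : MeasurableSet A) :
    volume A = ∫⁻ y : (ℝ ∙ e)ᗮ, volume (slice e A y) := by
  have hcoord := measurePreserving_add_smul he
  rw [← hcoord.measure_preimage hA.nullMeasurableSet, Measure.prod_apply (hcoord.measurable hA)]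
  rfl

theorem volume_prod_eq_lintegral_lintegral_slice (he : ‖e‖ = 1) {T : Set (E × E)}
    (hT : MeasurableSet T) : volume T = ∫⁻ y : (ℝ ∙ e)ᗮ, ∫⁻ y' : (ℝ ∙ e)ᗮ,
      volume {s : ℝ × ℝ | (y + s.1 • e, y' + s.2 • e) ∈ T} := by
  have hcoord := (measurePreserving_add_smul he).prod (measurePreserving_add_smul he)
  rw [Measure.volume_eq_prod, ← hcoord.measure_preimage hT.nullMeasurableSet,
    prod_prod_apply_eq_lintegral_lintegral _ _ _ _ (hcoord.measurable hT)]
  rfl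

theorem volume_steiner (he : ‖e‖ = 1) {A : Set E} (hA : MeasurableSet A) :
    volume (steiner e A) = volume A := by
  simp_rw [volume_eq_lintegral_slice he hA,
    volume_eq_lintegral_slice he (measurableSet_steiner e hA), slice_steiner he,
    volume_centeredInterval]

theorem volume_addTriples_le_steiner (he : ‖e‖ = 1) {A B C : Set E} (hA : MeasurableSet A)
    (hB : MeasurableSet B) (hC : MeasurableSet C) :
    volume (addTriples A B C) ≤
      volume (addTriples (steiner e A) (steiner e B) (steiner e C)) := by
  have hfibre : ∀ (A B C : Set E) (y y' : (ℝ ∙ e)ᗮ),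
      {s : ℝ × ℝ | ((y : E) + s.1 • e, (y' : E) + s.2 • e) ∈ addTriples A B C} =
        addTriples (slice e A y) (slice e B y') (slice e C ↑(y + y')) := fun A B C y y' => by
    simp only [addTriples, slice, mem_ofPred_eq, Submodule.coe_add, add_smul, add_add_add_comm]
  simp_rw [volume_prod_eq_lintegral_lintegral_slice he (measurableSet_addTriples hA hB hC),
    volume_prod_eq_lintegral_lintegral_slice he (measurableSet_addTriples
      (measurableSet_steiner e hA) (measurableSet_steiner e hB) (measurableSet_steiner e hC)),
    hfibre, slice_steiner he]
  exact lintegral_mono fun y => lintegral_mono fun y' => volume_addTriples_le_centeredInterval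
    (measurableSet_slice e hA _) (measurableSet_slice e hB _) (measurableSet_slice e hC _)

theorem measure_inter_add_measure_sdiff_inter_sub_le_min {G : Type*} [AddGroup G]
    [MeasurableSpace G] [MeasurableAdd G] (μ : Measure G) [μ.IsAddRightInvariant] {A K : Set G}
    (hA : MeasurableSet A) (hK : MeasurableSet K) (v : G) :
    μ (A ∩ K) + μ ((A \ K) ∩ {x | x - v ∈ K \ A}) ≤ min (μ A) (μ K) := by
  refine le_min ?_ ?_
  · grw [← measure_inter_add_sdiff A hK, inter_subset_left (s := A \ K)]
  · grw [← measure_inter_add_sdiff K hA, inter_comm K A, inter_subset_right (s := A \ K)]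
    exact (congrArg _ ((measurePreserving_sub_right μ v).measure_preimage
      (hK.diff hA).nullMeasurableSet)).le

theorem volume_inter_add_le_volume_steiner_inter (he : ‖e‖ = 1) {A K : Set E}
    (hA : MeasurableSet A) (hK : MeasurableSet K) (hKe : steiner e K ⊆ K) (r : ℝ) :
    volume (A ∩ K) + volume ((A \ K) ∩ {x | x - r • e ∈ K \ A}) ≤ volume (steiner e A ∩ K) := by
  have hoverlap : MeasurableSet ((A \ K) ∩ {x | x - r • e ∈ K \ A}) :=
    (hA.diff hK).inter ((measurable_sub_const (r • e)) (hK.diff hA))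
  have hslice : ∀ y : E, slice e ((A \ K) ∩ {x | x - r • e ∈ K \ A}) y =
      (slice e A y \ slice e K y) ∩ {s | s - r ∈ slice e K y \ slice e A y} := fun y => by
    ext s
    simp only [slice, mem_inter_iff, mem_sdiff, mem_ofPred_eq, sub_smul, add_sub_assoc]
  calc volume (A ∩ K) + volume ((A \ K) ∩ {x | x - r • e ∈ K \ A})
      ≤ ∫⁻ y : (ℝ ∙ e)ᗮ, min (volume (slice e A y)) (volume (slice e K y)) := by
        rw [volume_eq_lintegral_slice he (hA.inter hK), volume_eq_lintegral_slice he hoverlap]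
        grw [le_lintegral_add]
        refine lintegral_mono fun y => ?_
        rw [hslice]
        exact measure_inter_add_measure_sdiff_inter_sub_le_min volume
          (measurableSet_slice e hA y) (measurableSet_slice e hK y) r
    _ = volume (steiner e A ∩ steiner e K) := by
        rw [volume_eq_lintegral_slice he
          ((measurableSet_steiner e hA).inter (measurableSet_steiner e hK))]
        refine lintegral_congr fun y => ?_
        change _ = volume (slice e (steiner e A) y ∩ slice e (steiner e K) y)
        rw [slice_steiner he, slice_steiner he, centeredInterval_inter_centeredInterval,
          volume_centeredInterval]
    _ ≤ volume (steiner e A ∩ K) := by gcongr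

theorem volume_steiner_sdiff_add_le (he : ‖e‖ = 1) {A K : Set E} (hA : MeasurableSet A)
    (hAfin : volume A ≠ ⊤) (hK : MeasurableSet K) (hKe : steiner e K ⊆ K) (r : ℝ) :
    volume (steiner e A \ K) + volume ((A \ K) ∩ {x | x - r • e ∈ K \ A}) ≤
      volume (A \ K) := by
  have hinter : volume (A ∩ K) ≠ ⊤ := measure_ne_top_of_subset inter_subset_left hAfin
  refine (ENNReal.add_le_add_iff_left hinter).1 ?_
  calc volume (A ∩ K) +
        (volume (steiner e A \ K) + volume ((A \ K) ∩ {x | x - r • e ∈ K \ A}))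
      ≤ volume (steiner e A ∩ K) + volume (steiner e A \ K) := by
        grw [← volume_inter_add_le_volume_steiner_inter he hA hK hKe r]
        rw [add_assoc, add_comm (volume (steiner e A \ K))]
    _ = volume (A ∩ K) + volume (A \ K) := by
        rw [measure_inter_add_sdiff _ hK, measure_inter_add_sdiff _ hK, volume_steiner he hA]

end Steiner

section IteratedSteiner

theorem exists_lt_measure_inter_sub_mem {G : Type*} [NormedAddCommGroup G]
    [SecondCountableTopology G] [MeasurableSpace G] [BorelSpace G] (μ : Measure G) [SFinite μ]
    [μ.IsAddLeftInvariant] [μ.IsNegInvariant] {M N : Set G} (hM : MeasurableSet M)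
    (hN : MeasurableSet N) {D : ℝ} (hMD : M ⊆ closedBall 0 D) (hND : N ⊆ closedBall 0 D)
    {η : ℝ≥0∞} (hη : η * μ (closedBall 0 (2 * D)) < μ M * μ N) :
    ∃ v, η < μ (M ∩ {x | x - v ∈ N}) := by
  by_contra! hle
  have hoverlap : μ M * μ N = ∫⁻ v, μ (M ∩ {x | x - v ∈ N}) ∂μ := by
    rw [← Measure.measure_neg μ N, ← Measure.prod_prod,
      prod_apply_eq_lintegral_sub μ μ (hM.prod hN.neg)]
    simp only [mem_prod, mem_neg, neg_sub]
    rfl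
  refine hη.not_ge ?_
  rw [hoverlap, ← setLIntegral_const, ← lintegral_indicator measurableSet_closedBall]
  refine lintegral_mono fun v => ?_
  by_cases hv : v ∈ closedBall (0 : G) (2 * D)
  · simpa only [indicator_of_mem hv] using hle v
  · rw [indicator_of_notMem hv, nonpos_iff_eq_zero, ← measure_empty (μ := μ)]
    congr 1
    refine eq_empty_of_forall_notMem fun x ⟨hxM, hxN⟩ => hv ?_
    rw [mem_closedBall_zero_iff, ← sub_sub_cancel x v]
    linarith [norm_sub_le x (x - v), mem_closedBall_zero_iff.1 (hMD hxM),
      mem_closedBall_zero_iff.1 (hND hxN)]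

theorem measure_sdiff_le_measure_sdiff_of_measure_le {α : Type*} [MeasurableSpace α]
    {μ : Measure α} {s t : Set α} (hs : MeasurableSet s) (ht : MeasurableSet t)
    (hst : μ (s ∩ t) ≠ ⊤) (hle : μ s ≤ μ t) : μ (s \ t) ≤ μ (t \ s) := by
  refine (ENNReal.add_le_add_iff_left hst).1 ?_
  rwa [measure_inter_add_sdiff s ht, inter_comm, measure_inter_add_sdiff t hs]

variable {E : Type*} [NormedAddCommGroup E] [InnerProductSpace ℝ E]

/-- The result of Steiner symmetrizing `A` successively with respect to the hyperplanes orthogonal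
to the unit vectors in `l`, the last one first. -/
def iteratedSteiner (l : List (sphere (0 : E) 1)) (A : Set E) : Set E :=
  l.foldr (fun e => steiner (e : E)) A

theorem iteratedSteiner_subset_closedBall (l : List (sphere (0 : E) 1)) {A : Set E} {D : ℝ}
    (hA : A ⊆ closedBall 0 D) : iteratedSteiner l A ⊆ closedBall 0 D := by
  induction l with
  | nil => exact hA
  | cons e l ih =>
    exact (steiner_mono _ ih).trans (steiner_closedBall_subset (norm_eq_of_mem_sphere e) D)

variable [MeasurableSpace E] [BorelSpace E] [FiniteDimensional ℝ E]

theorem measurableSet_iteratedSteiner (l : List (sphere (0 : E) 1)) {A : Set E}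
    (hA : MeasurableSet A) : MeasurableSet (iteratedSteiner l A) := by
  induction l with
  | nil => exact hA
  | cons e l ih => exact measurableSet_steiner _ ih

theorem volume_iteratedSteiner (l : List (sphere (0 : E) 1)) {A : Set E} (hA : MeasurableSet A) :
    volume (iteratedSteiner l A) = volume A := by
  induction l with
  | nil => rfl
  | cons e l ih =>
    exact (volume_steiner (norm_eq_of_mem_sphere e) (measurableSet_iteratedSteiner l hA)).trans ih

theorem volume_addTriples_le_iteratedSteiner (l : List (sphere (0 : E) 1)) {A B C : Set E}
    (hA : MeasurableSet A) (hB : MeasurableSet B) (hC : MeasurableSet C) :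
    volume (addTriples A B C) ≤ volume (addTriples (iteratedSteiner l A) (iteratedSteiner l B)
      (iteratedSteiner l C)) := by
  induction l with
  | nil => rfl
  | cons e l ih =>
    exact ih.trans (volume_addTriples_le_steiner (norm_eq_of_mem_sphere e)
      (measurableSet_iteratedSteiner l hA) (measurableSet_iteratedSteiner l hB)
      (measurableSet_iteratedSteiner l hC))

theorem exists_volume_steiner_sdiff_add_le {A : Set E} (hA : MeasurableSet A) {D ρ : ℝ}
    (hAD : A ⊆ closedBall 0 D) (hρD : closedBall (0 : E) ρ ⊆ closedBall 0 D) {η : ℝ≥0∞}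
    (hη : η * volume (closedBall (0 : E) (2 * D)) <
      volume (A \ closedBall 0 ρ) * volume (closedBall 0 ρ \ A)) :
    ∃ e : sphere (0 : E) 1,
      volume (steiner (e : E) A \ closedBall 0 ρ) + η ≤ volume (A \ closedBall 0 ρ) := by
  obtain ⟨v, hv⟩ := exists_lt_measure_inter_sub_mem volume (hA.diff measurableSet_closedBall)
    (measurableSet_closedBall.diff hA) (sdiff_subset.trans hAD) (sdiff_subset.trans hρD) hη
  obtain ⟨x, hx, hxv⟩ := nonempty_of_measure_ne_zero hv.ne_bot
  have hv0 : v ≠ 0 := fun hv0 => hx.2 (by simpa only [hv0, sub_zero] using hxv.out.1)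
  have hunit : ‖‖v‖⁻¹ • v‖ = 1 := norm_smul_inv_norm hv0
  have hscale : ‖v‖ • ‖v‖⁻¹ • v = v := smul_inv_smul₀ (norm_ne_zero_iff.2 hv0) v
  refine ⟨⟨_, mem_sphere_zero_iff_norm.2 hunit⟩, ?_⟩
  have hsteiner := volume_steiner_sdiff_add_le hunit hA
    (measure_ne_top_of_subset hAD measure_closedBall_lt_top.ne) measurableSet_closedBall
    (steiner_closedBall_subset hunit ρ) ‖v‖
  rw [hscale] at hsteiner
  grw [hv.le, hsteiner]

theorem exists_sum_volume_steiner_sdiff_add_le {ι : Type*} [Fintype ι] {A : ι → Set E} {ρ : ι → ℝ}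
    {D : ℝ} (hA : ∀ i, MeasurableSet (A i)) (hAD : ∀ i, A i ⊆ closedBall 0 D)
    (hρD : ∀ i, closedBall (0 : E) (ρ i) ⊆ closedBall 0 D) {i : ι} {η : ℝ≥0∞}
    (hη : η * volume (closedBall (0 : E) (2 * D)) <
      volume (A i \ closedBall 0 (ρ i)) * volume (closedBall 0 (ρ i) \ A i)) :
    ∃ e : sphere (0 : E) 1, ∑ j, volume (steiner (e : E) (A j) \ closedBall 0 (ρ j)) + η ≤
      ∑ j, volume (A j \ closedBall 0 (ρ j)) := by
  classical
  obtain ⟨e, he⟩ := exists_volume_steiner_sdiff_add_le (hA i) (hAD i) (hρD i) hη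
  have hunit := norm_eq_of_mem_sphere e
  have hmono : ∀ j, volume (steiner (e : E) (A j) \ closedBall 0 (ρ j)) ≤
      volume (A j \ closedBall 0 (ρ j)) := fun j =>
    le_self_add.trans (volume_steiner_sdiff_add_le hunit (hA j)
      (measure_ne_top_of_subset (hAD j) measure_closedBall_lt_top.ne) measurableSet_closedBall
      (steiner_closedBall_subset hunit (ρ j)) 0)
  refine ⟨e, ?_⟩
  rw [← Finset.add_sum_erase _ _ (Finset.mem_univ i), add_right_comm,
    ← Finset.add_sum_erase _ (fun j => volume (A j \ closedBall 0 (ρ j))) (Finset.mem_univ i)]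
  exact add_le_add he (Finset.sum_le_sum fun j _ => hmono j)

theorem exists_iteratedSteiner_forall_volume_sdiff_lt {ι : Type*} [Finite ι] {A : ι → Set E}
    {ρ : ι → ℝ} (hA : ∀ i, MeasurableSet (A i)) (hAb : ∀ i, Bornology.IsBounded (A i))
    (hAρ : ∀ i, volume (A i) ≤ volume (closedBall (0 : E) (ρ i))) {ε : ℝ≥0∞} (hε : ε ≠ 0) :
    ∃ l, ∀ i, volume (iteratedSteiner l (A i) \ closedBall 0 (ρ i)) < ε := by
  cases nonempty_fintype ι
  by_contra! hfar
  obtain ⟨D, hD⟩ := (Bornology.isBounded_iUnion.2 fun i =>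
    (hAb i).union (isBounded_closedBall (x := (0 : E)) (r := ρ i))).subset_closedBall 0
  obtain ⟨hAD, hρD⟩ : (∀ i, A i ⊆ closedBall 0 D) ∧
      ∀ i, closedBall (0 : E) (ρ i) ⊆ closedBall 0 D := by
    simpa only [iUnion_subset_iff, union_subset_iff, forall_and] using hD
  obtain ⟨η, hη0, hη⟩ := ENNReal.exists_nnreal_pos_mul_lt (b := ε * ε)
    (measure_closedBall_lt_top (μ := volume) (x := (0 : E)) (r := 2 * D)).ne (mul_ne_zero hε hε)
  let f : List (sphere (0 : E) 1) → ℝ≥0∞ := fun l =>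
    ∑ i, volume (iteratedSteiner l (A i) \ closedBall 0 (ρ i))
  have hinf : ⨅ l, f l ≠ ⊤ := ne_top_of_le_ne_top (ENNReal.sum_ne_top.2 fun i _ =>
    ((hAb i).subset sdiff_subset).measure_lt_top.ne) (iInf_le f [])
  obtain ⟨l, hl⟩ : ∃ l, f l < (⨅ l, f l) + η :=
    iInf_lt_iff.1 (ENNReal.lt_add_right hinf (ENNReal.coe_ne_zero.2 hη0.ne'))
  have hlm := fun i => measurableSet_iteratedSteiner l (hA i)
  obtain ⟨i, hi⟩ := hfar l
  have hi' := hi.trans (measure_sdiff_le_measure_sdiff_of_measure_le (hlm i)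
    measurableSet_closedBall (measure_ne_top_of_subset inter_subset_right
      measure_closedBall_lt_top.ne) ((volume_iteratedSteiner l (hA i)).trans_le (hAρ i)))
  obtain ⟨e, he⟩ : ∃ e, f (e :: l) + η ≤ f l := exists_sum_volume_steiner_sdiff_add_le hlm
    (fun j => iteratedSteiner_subset_closedBall l (hAD j)) hρD (hη.trans_le (mul_le_mul' hi hi'))
  exact hl.not_ge (by grw [iInf_le f (e :: l), he])

end IteratedSteiner

section Riesz

variable {E : Type*} [NormedAddCommGroup E] [InnerProductSpace ℝ E] [MeasurableSpace E]
  [BorelSpace E] [FiniteDimensional ℝ E]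

theorem volume_addTriples_le_closedBall_of_isBounded {A B C : Set E} (hA : MeasurableSet A)
    (hB : MeasurableSet B) (hC : MeasurableSet C) (hAb : Bornology.IsBounded A)
    (hBb : Bornology.IsBounded B) (hCb : Bornology.IsBounded C) {ρ₁ ρ₂ R : ℝ}
    (hvolA : volume A ≤ volume (closedBall (0 : E) ρ₁))
    (hvolB : volume B ≤ volume (closedBall (0 : E) ρ₂))
    (hvolC : volume C ≤ volume (closedBall (0 : E) R)) :
    volume (addTriples A B C) ≤
      volume (addTriples (closedBall (0 : E) ρ₁) (closedBall 0 ρ₂) (closedBall 0 R)) := by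
  refine ENNReal.le_of_forall_pos_le_add fun δ hδ _ => ?_
  have hfin : volume B + volume A + volume A ≠ ⊤ := by
    simp [hAb.measure_lt_top.ne, hBb.measure_lt_top.ne]
  obtain ⟨ε, hε0, hε⟩ := ENNReal.exists_nnreal_pos_mul_lt hfin (ENNReal.coe_ne_zero.2 hδ.ne')
  obtain ⟨l, hl⟩ := exists_iteratedSteiner_forall_volume_sdiff_lt (A := ![A, B, C])
    (ρ := ![ρ₁, ρ₂, R]) (by simp [Fin.forall_fin_succ, *]) (by simp [Fin.forall_fin_succ, *])
    (by simp [Fin.forall_fin_succ, *]) (ENNReal.coe_ne_zero.2 hε0.ne')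
  obtain ⟨hlA, hlB, hlC⟩ :
      volume (iteratedSteiner l A \ closedBall 0 ρ₁) < ε ∧
      volume (iteratedSteiner l B \ closedBall 0 ρ₂) < ε ∧
      volume (iteratedSteiner l C \ closedBall 0 R) < ε := ⟨hl 0, hl 1, hl 2⟩
  grw [volume_addTriples_le_iteratedSteiner l hA hB hC, Measure.volume_eq_prod,
    measure_addTriples_le_add volume _ (closedBall 0 ρ₁) (closedBall 0 ρ₂)
      (measurableSet_iteratedSteiner l hA) (measurableSet_iteratedSteiner l hC)
      (measurableSet_closedBall (x := 0) (ε := R)), hlA, hlB, hlC, volume_iteratedSteiner l hA,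
    volume_iteratedSteiner l hB, ← hε]
  exact (congrArg _ (by ring)).le

theorem volume_addTriples_le_closedBall_of_measurableSet {A B C : Set E} (hA : MeasurableSet A)
    (hB : MeasurableSet B) (hC : MeasurableSet C) {ρ₁ ρ₂ R : ℝ}
    (hvolA : volume A ≤ volume (closedBall (0 : E) ρ₁))
    (hvolB : volume B ≤ volume (closedBall (0 : E) ρ₂))
    (hvolC : volume C ≤ volume (closedBall (0 : E) R)) :
    volume (addTriples A B C) ≤
      volume (addTriples (closedBall (0 : E) ρ₁) (closedBall 0 ρ₂) (closedBall 0 R)) := by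
  refine measure_addTriples_le_of_forall_inter_closedBall _ fun r => ?_
  have hmeas : ∀ {S : Set E}, MeasurableSet S → MeasurableSet (S ∩ closedBall 0 r) :=
    fun hS => hS.inter measurableSet_closedBall
  have hbdd : ∀ S : Set E, Bornology.IsBounded (S ∩ closedBall 0 r) :=
    fun _ => isBounded_closedBall.subset inter_subset_right
  have hvol : ∀ {S : Set E} {ρ : ℝ}, volume S ≤ volume (closedBall (0 : E) ρ) →
      volume (S ∩ closedBall 0 r) ≤ volume (closedBall (0 : E) ρ) :=
    (measure_mono inter_subset_left).trans
  exact volume_addTriples_le_closedBall_of_isBounded (hmeas hA) (hmeas hB) (hmeas hC)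
    (hbdd A) (hbdd B) (hbdd C) (hvol hvolA) (hvol hvolB) (hvol hvolC)

theorem volume_addTriples_le_closedBall {A B C : Set E} {ρ₁ ρ₂ R : ℝ}
    (hvolA : volume A ≤ volume (closedBall (0 : E) ρ₁))
    (hvolB : volume B ≤ volume (closedBall (0 : E) ρ₂))
    (hvolC : volume C ≤ volume (closedBall (0 : E) R)) :
    volume (addTriples A B C) ≤
      volume (addTriples (closedBall (0 : E) ρ₁) (closedBall 0 ρ₂) (closedBall 0 R)) :=
  (measure_mono (addTriples_mono (subset_toMeasurable volume A) (subset_toMeasurable volume B)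
    (subset_toMeasurable volume C))).trans
  (volume_addTriples_le_closedBall_of_measurableSet (measurableSet_toMeasurable _ _)
    (measurableSet_toMeasurable _ _) (measurableSet_toMeasurable _ _)
    ((measure_toMeasurable A).trans_le hvolA) ((measure_toMeasurable B).trans_le hvolB)
    ((measure_toMeasurable C).trans_le hvolC))

theorem ball_symmetrization_inequality_general {A₀ B₀ C : Set E}
    (hA : NullMeasurableSet A₀) (hB : NullMeasurableSet B₀) (hC : NullMeasurableSet C)
    {ρ₁ ρ₂ R : ℝ} (hvolA : volume A₀ ≤ volume (closedBall (0 : E) ρ₁))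
    (hvolB : volume B₀ ≤ volume (closedBall (0 : E) ρ₂))
    (hvolC : volume C ≤ volume (closedBall (0 : E) R)) :
    volume {p : E × E | p.1 ∈ A₀ ∧ p.2 ∈ B₀ ∧ p.1 + p.2 ∈ C} ≤
      volume {p : E × E | ‖p.1‖ ≤ ρ₁ ∧ ‖p.2‖ ≤ ρ₂ ∧ ‖p.1 + p.2‖ ≤ R} ∧
    (∫ x : E, ∫ y : E, A₀.indicator (fun _ => (1 : ℝ)) x * B₀.indicator (fun _ => (1 : ℝ)) y *
        C.indicator (fun _ => (1 : ℝ)) (x + y)) ≤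
      ∫ x : E, ∫ y : E, (closedBall (0 : E) ρ₁).indicator (fun _ => (1 : ℝ)) x *
        (closedBall (0 : E) ρ₂).indicator (fun _ => (1 : ℝ)) y *
        (closedBall (0 : E) R).indicator (fun _ => (1 : ℝ)) (x + y) := by
  have hmain := volume_addTriples_le_closedBall hvolA hvolB hvolC
  have hball : ∀ r, NullMeasurableSet (closedBall (0 : E) r) :=
    fun _ => measurableSet_closedBall.nullMeasurableSet
  have hball_fin : ∀ r, volume (closedBall (0 : E) r) ≠ ⊤ :=
    fun _ => measure_closedBall_lt_top.ne
  constructor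
  · simpa only [addTriples, mem_closedBall_zero_iff] using hmain
  · rw [integral_integral_indicator_mul_indicator_add volume hA hB hC
        (ne_top_of_le_ne_top (hball_fin _) hvolA) (ne_top_of_le_ne_top (hball_fin _) hvolB),
      integral_integral_indicator_mul_indicator_add volume (hball _) (hball _) (hball _)
        (hball_fin _) (hball_fin _)]
    exact ENNReal.toReal_mono (measure_addTriples_ne_top (hball_fin _) (hball_fin _)) hmain

end Riesz

/-- Brascamp–Lieb–Luttinger special case: replacing `A₀`, `B₀`, `C` by balls of
the same volumes increases `λ({(x, y) ∈ A₀ × B₀ : x + y ∈ C})`. -/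
theorem ball_symmetrization_inequality (n : ℕ) (hn : 0 < n)
    (A₀ B₀ C : Set (EuclideanSpace ℝ (Fin n)))
    (hA : MeasurableSet A₀) (hB : MeasurableSet B₀) (hC : MeasurableSet C)
    (hAfin : volume A₀ < ⊤) (hBfin : volume B₀ < ⊤) (hCfin : volume C < ⊤)
    (ρ₁ ρ₂ R : ℝ) (hρ₁ : 0 < ρ₁) (hρ₂ : 0 < ρ₂) (hR : 0 < R)
    (hvolA : volume A₀ = volume (Metric.closedBall (0 : EuclideanSpace ℝ (Fin n)) ρ₁))
    (hvolB : volume B₀ = volume (Metric.closedBall (0 : EuclideanSpace ℝ (Fin n)) ρ₂))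
    (hvolC : volume C = volume (Metric.closedBall (0 : EuclideanSpace ℝ (Fin n)) R)) :
    volume {p : EuclideanSpace ℝ (Fin n) × EuclideanSpace ℝ (Fin n) |
        p.1 ∈ A₀ ∧ p.2 ∈ B₀ ∧ p.1 + p.2 ∈ C}
      ≤ volume {p : EuclideanSpace ℝ (Fin n) × EuclideanSpace ℝ (Fin n) |
          ‖p.1‖ ≤ ρ₁ ∧ ‖p.2‖ ≤ ρ₂ ∧ ‖p.1 + p.2‖ ≤ R} ∧
    (∫ x : EuclideanSpace ℝ (Fin n), ∫ y : EuclideanSpace ℝ (Fin n),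
        A₀.indicator (fun _ => (1 : ℝ)) x * B₀.indicator (fun _ => (1 : ℝ)) y *
          C.indicator (fun _ => (1 : ℝ)) (x + y))
      ≤ ∫ x : EuclideanSpace ℝ (Fin n), ∫ y : EuclideanSpace ℝ (Fin n),
          (Metric.closedBall (0 : EuclideanSpace ℝ (Fin n)) ρ₁).indicator
              (fun _ => (1 : ℝ)) x *
            (Metric.closedBall (0 : EuclideanSpace ℝ (Fin n)) ρ₂).indicator
              (fun _ => (1 : ℝ)) y *
            (Metric.closedBall (0 : EuclideanSpace ℝ (Fin n)) R).indicator
              (fun _ => (1 : ℝ)) (x + y) :=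
  ball_symmetrization_inequality_general hA.nullMeasurableSet hB.nullMeasurableSet
    hC.nullMeasurableSet hvolA.le hvolB.le hvolC.le
end

section
/- There exists a universal constant c > 0 with the following property. Let n be a positive integer, let ρ₁ ≥ ρ₂ > 0, set ρ = ρ₂/ρ₁, and let R > 0 satisfy R < (ρ₁² + ρ₂²)^{1/2}. Then λ({ (x, y) ∈ ℝⁿ × ℝⁿ : |x| ≤ ρ₁, |y| ≤ ρ₂, |x + y| ≤ R }) ≤ (1 − c·min{ρ√n, 1})·λ(ρ₁Bⁿ)·λ(ρ₂Bⁿ), where |·| denotes the Euclidean norm. -/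
open MeasureTheory

/-!
Fix a small angle parameter `ε` of order `1 / √n` and let `w = ε ρ₂ / 4`. If `x` and `y` lie in the
shells of thickness `w` inside the spheres of radii `ρ₁` and `ρ₂`, and the cosine of the angle
between them is at least `ε`, then the gain `2⟪x, y⟫ ≥ 2ε‖x‖‖y‖` outweighs the loss in
`‖x‖² + ‖y‖²`, so that `‖x + y‖² > ρ₁² + ρ₂²`. Such pairs are common enough: a shell of thickness
`w` fills a proportion of order `min (n w / ρ) 1` of the ball of radius `ρ`, and the cone of vectors
at cosine at least `ε` with a fixed `x` cuts out the same proportion of the shell as of the ball. By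
the symmetry `y ↦ -y` the cone fills half of what is left of the ball after removing the slab
`|⟪x, y⟫| ≤ ε ρ₂ ‖x‖`, and stretching this slab by the factor `4` along `x` maps it into a ball
whose volume is at most twice as large, so the slab is at most half of the ball.
-/

section RealInequalities

theorem one_sub_pow_le_one_sub_min_div_two {δ : ℝ} (hδ : 0 ≤ δ) (hδ1 : δ ≤ 1) (n : ℕ) :
    (1 - δ) ^ n ≤ 1 - min (n * δ) 1 / 2 := by
  have hm0 : 0 ≤ min (n * δ) 1 := le_min (by positivity) zero_le_one
  have hm1 : min (n * δ) 1 ≤ 1 := min_le_right _ _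
  have hbernoulli : 1 + min (n * δ) 1 ≤ (1 + δ) ^ n :=
    (add_le_add_right (min_le_left _ _) 1).trans (one_add_mul_le_pow (by linarith) n)
  refine le_of_mul_le_mul_right ?_ (by linarith : 0 < 1 + min (n * δ) 1)
  calc (1 - δ) ^ n * (1 + min (n * δ) 1) ≤ (1 - δ) ^ n * (1 + δ) ^ n :=
        mul_le_mul_of_nonneg_left hbernoulli (pow_nonneg (sub_nonneg.mpr hδ1) n)
    _ = (1 - δ ^ 2) ^ n := by rw [← mul_pow]; ring
    _ ≤ 1 := pow_le_one₀ (by nlinarith) (by nlinarith)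
    _ ≤ (1 - min (n * δ) 1 / 2) * (1 + min (n * δ) 1) := by nlinarith

theorem sqrt_one_add_inv_pow_le_two (n : ℕ) : √(1 + (n : ℝ)⁻¹) ^ n ≤ 2 := by
  refine le_of_sq_le_sq ?_ zero_le_two
  calc (√(1 + (n : ℝ)⁻¹) ^ n) ^ 2 = (1 + (n : ℝ)⁻¹) ^ n := by
        rw [← pow_mul, mul_comm, pow_mul, Real.sq_sqrt (by positivity)]
    _ ≤ Real.exp 1 := Real.one_add_inv_pow_le_exp
    _ ≤ 2 ^ 2 := by linarith [Real.exp_one_lt_three]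

theorem min_one_le_mul_min_div_one (a : ℝ) {b : ℝ} (hb : 1 ≤ b) :
    min a 1 ≤ b * min (a / b) 1 := by
  rw [mul_min_of_nonneg _ _ (by linarith), mul_div_cancel₀ a (by linarith), mul_one]
  exact min_le_min_left a hb

/-- The cosine above which two vectors in dimension `n` count as forming an acute angle. It is of
the order of the typical cosine between random vectors; the factor `4` makes the slab of this
relative half-width fill at most half of the ball. Its value is `0` for `n = 0`. -/
noncomputable def thresholdCosine (n : ℕ) : ℝ :=
  1 / (4 * √n)

theorem thresholdCosine_nonneg (n : ℕ) : 0 ≤ thresholdCosine n := by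
  unfold thresholdCosine
  positivity

theorem thresholdCosine_le_one (n : ℕ) : thresholdCosine n ≤ 1 := by
  obtain rfl | hn := n.eq_zero_or_pos
  · simp [thresholdCosine]
  · have hs : 1 ≤ √(n : ℝ) := Real.one_le_sqrt.mpr (Nat.one_le_cast.mpr hn)
    exact div_le_one_of_le₀ (by linarith) (by positivity)

theorem natCast_mul_thresholdCosine (n : ℕ) : n * thresholdCosine n = √n / 4 := by
  rw [thresholdCosine, mul_one_div, mul_comm 4, ← div_div, Real.div_sqrt]

theorem thresholdCosine_sq (n : ℕ) : thresholdCosine n ^ 2 = (n : ℝ)⁻¹ / 16 := by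
  rw [thresholdCosine, div_pow, mul_pow, Real.sq_sqrt (Nat.cast_nonneg n)]
  ring

theorem min_one_le_mul_min_mul_min_thresholdCosine {ρ₁ ρ₂ : ℝ} (hρ₁ : 0 < ρ₁) (hρ₂ : 0 < ρ₂)
    (n : ℕ) :
    min (ρ₂ / ρ₁ * √n) 1 ≤ 256 * (min (n * (thresholdCosine n * ρ₂ / 4 / ρ₁)) 1 *
      min (n * (thresholdCosine n * ρ₂ / 4 / ρ₂)) 1) := by
  obtain rfl | hn := n.eq_zero_or_pos
  · simp
  have hs : 1 ≤ √(n : ℝ) := Real.one_le_sqrt.mpr (Nat.one_le_cast.mpr hn)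
  have hratio₁ : n * (thresholdCosine n * ρ₂ / 4 / ρ₁) = ρ₂ / ρ₁ * √n / 16 := by
    linear_combination ρ₂ / ρ₁ / 4 * natCast_mul_thresholdCosine n
  have hratio₂ : n * (thresholdCosine n * ρ₂ / 4 / ρ₂) = √n / 16 := by
    rw [mul_div_right_comm, mul_div_cancel_right₀ _ hρ₂.ne']
    linear_combination natCast_mul_thresholdCosine n / 4
  rw [hratio₁, hratio₂]
  calc min (ρ₂ / ρ₁ * √n) 1 ≤ 16 * min (ρ₂ / ρ₁ * √n / 16) 1 :=
        min_one_le_mul_min_div_one _ (by norm_num)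
    _ ≤ 16 * min (ρ₂ / ρ₁ * √n / 16) 1 * (16 * min (√n / 16) 1) :=
        le_mul_of_one_le_right (by positivity)
          ((le_min hs le_rfl).trans (min_one_le_mul_min_div_one _ (by norm_num)))
    _ = 256 * (min (ρ₂ / ρ₁ * √n / 16) 1 * min (√n / 16) 1) := by ring

end RealInequalities

section MeasureGeneralities

variable {α β : Type*} [MeasurableSpace α] [MeasurableSpace β]

theorem measure_le_ofReal_mul_of_measureReal_le {μ : Measure α} {s t : Set α} {c : ℝ}
    (hs : μ s ≠ ⊤) (ht : μ t ≠ ⊤) (h : μ.real s ≤ c * μ.real t) :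
    μ s ≤ ENNReal.ofReal c * μ t := by
  rw [← ofReal_measureReal hs, ← ofReal_measureReal ht, ← ENNReal.ofReal_mul' measureReal_nonneg]
  exact ENNReal.ofReal_le_ofReal h

theorem mul_measureReal_le_measureReal_prod (μ : Measure α) (ν : Measure β) [SFinite ν]
    {G : Set (α × β)} (hG : MeasurableSet G) (hGfin : μ.prod ν G ≠ ⊤) {s : Set α}
    (hs : MeasurableSet s) {a : ℝ} (h : ∀ x ∈ s, a ≤ ν.real (Prod.mk x ⁻¹' G)) :
    a * μ.real s ≤ (μ.prod ν).real G := by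
  have hle : ENNReal.ofReal a * μ s ≤ μ.prod ν G := by
    rw [Measure.prod_apply hG, ← setLIntegral_const]
    exact (setLIntegral_mono' hs fun x hx ↦ ENNReal.ofReal_le_of_le_toReal (h x hx)).trans
      (setLIntegral_le_lintegral _ _)
  calc a * μ.real s ≤ (ENNReal.ofReal a).toReal * μ.real s := by
        gcongr
        exact (le_max_left a 0).trans_eq ENNReal.toReal_ofReal'.symm
    _ = (ENNReal.ofReal a * μ s).toReal := ENNReal.toReal_mul.symm
    _ ≤ (μ.prod ν).real G := ENNReal.toReal_mono hGfin hle

theorem measure_closedBall_prod_closedBall_ne_top {X Y : Type*} [PseudoMetricSpace X]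
    [ProperSpace X] [MeasurableSpace X] [PseudoMetricSpace Y] [ProperSpace Y] [MeasurableSpace Y]
    (μ : Measure X) (ν : Measure Y) [IsFiniteMeasureOnCompacts μ] [IsFiniteMeasureOnCompacts ν]
    [SFinite ν] (x : X) (y : Y) (r s : ℝ) :
    μ.prod ν (Metric.closedBall x r ×ˢ Metric.closedBall y s) ≠ ⊤ := by
  rw [Measure.prod_prod]
  exact ENNReal.mul_ne_top measure_closedBall_lt_top.ne measure_closedBall_lt_top.ne

end MeasureGeneralities

section Shells

open Module Metric Set
open scoped Pointwise

variable {E : Type*} [NormedAddCommGroup E]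

/-- The part of the closed ball of radius `r` about the origin lying within distance `w` of the
sphere of radius `r`; the inner sphere is excluded. -/
def outerShell (E : Type*) [NormedAddCommGroup E] (r w : ℝ) : Set E :=
  closedBall 0 r \ closedBall 0 (r - w)

theorem mem_outerShell {r w : ℝ} {x : E} : x ∈ outerShell E r w ↔ ‖x‖ ≤ r ∧ r - w < ‖x‖ := by
  simp [outerShell]

theorem outerShell_subset_closedBall (r w : ℝ) : outerShell E r w ⊆ closedBall 0 r :=
  sdiff_subset

theorem measurableSet_outerShell [MeasurableSpace E] [OpensMeasurableSpace E] (r w : ℝ) :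
    MeasurableSet (outerShell E r w) :=
  measurableSet_closedBall.diff measurableSet_closedBall

variable [NormedSpace ℝ E] [FiniteDimensional ℝ E] [MeasurableSpace E] [BorelSpace E]
  (μ : Measure E) [μ.IsAddHaarMeasure]

theorem measureReal_smul_of_nonneg {t : ℝ} (ht : 0 ≤ t) (s : Set E) :
    μ.real (t • s) = t ^ finrank ℝ E * μ.real s := by
  rw [measureReal_def, Measure.addHaar_smul_of_nonneg μ ht, ENNReal.toReal_mul,
    ENNReal.toReal_ofReal (by positivity), measureReal_def]

theorem measureReal_inter_closedBall_mul_le {K : Set E}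
    (hK : ∀ t : ℝ, 1 ≤ t → ∀ x ∈ K, t • x ∈ K) {t : ℝ} (ht : 0 < t) (ht1 : t ≤ 1) (r : ℝ) :
    μ.real (K ∩ closedBall 0 (t * r)) ≤ t ^ finrank ℝ E * μ.real (K ∩ closedBall 0 r) := by
  rw [← measureReal_smul_of_nonneg μ ht.le]
  have hfin : μ (t • (K ∩ closedBall 0 r)) ≠ ⊤ := by
    rw [Measure.addHaar_smul]
    exact ENNReal.mul_ne_top ENNReal.ofReal_ne_top
      (measure_ne_top_of_subset inter_subset_right measure_closedBall_lt_top.ne)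
  refine measureReal_mono ?_ hfin
  rintro x ⟨hxK, hx⟩
  rw [mem_closedBall_zero_iff] at hx
  rw [mem_smul_set_iff_inv_smul_mem₀ ht.ne']
  refine ⟨hK _ ((one_le_inv₀ ht).mpr ht1) x hxK, ?_⟩
  rwa [mem_closedBall_zero_iff, norm_smul, norm_inv, Real.norm_of_nonneg ht.le, inv_mul_le_iff₀ ht]

theorem le_measureReal_inter_outerShell {K : Set E}
    (hK : ∀ t : ℝ, 1 ≤ t → ∀ x ∈ K, t • x ∈ K) {r w : ℝ} (hw : 0 ≤ w) (hwr : w < r) :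
    min (finrank ℝ E * (w / r)) 1 / 2 * μ.real (K ∩ closedBall 0 r) ≤
      μ.real (K ∩ outerShell E r w) := by
  have hr : 0 < r := hw.trans_lt hwr
  have hwr' : w / r < 1 := (div_lt_one hr).mpr hwr
  have hwr0 : 0 ≤ w / r := div_nonneg hw hr.le
  have hinner : μ.real (K ∩ closedBall 0 (r - w)) ≤
      (1 - min (finrank ℝ E * (w / r)) 1 / 2) * μ.real (K ∩ closedBall 0 r) := by
    have hmul : r - w = (1 - w / r) * r := by field_simp
    rw [hmul]
    refine (measureReal_inter_closedBall_mul_le μ hK (by linarith) (by linarith) r).trans ?_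
    gcongr
    exact one_sub_pow_le_one_sub_min_div_two hwr0 hwr'.le _
  have hcover : K ∩ closedBall 0 r ⊆ K ∩ outerShell E r w ∪ K ∩ closedBall 0 (r - w) := by
    rw [← inter_union_distrib_left, outerShell, sdiff_union_self]
    exact inter_subset_inter_right _ subset_union_left
  have hsplit : μ.real (K ∩ closedBall 0 r) ≤
      μ.real (K ∩ outerShell E r w) + μ.real (K ∩ closedBall 0 (r - w)) :=
    (measureReal_mono hcover (measure_union_ne_top
      (measure_ne_top_of_subset (inter_subset_right.trans sdiff_subset)
        measure_closedBall_lt_top.ne)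
      (measure_ne_top_of_subset inter_subset_right measure_closedBall_lt_top.ne))).trans
      (measureReal_union_le _ _)
  linarith

theorem le_measureReal_outerShell {r w : ℝ} (hw : 0 ≤ w) (hwr : w < r) :
    min (finrank ℝ E * (w / r)) 1 / 2 * μ.real (closedBall 0 r) ≤ μ.real (outerShell E r w) := by
  simpa using le_measureReal_inter_outerShell μ (K := univ) (by simp) hw hwr

end Shells

section SlabsAndCones

open Module Metric Set
open scoped RealInnerProductSpace

variable {E : Type*} [NormedAddCommGroup E] [InnerProductSpace ℝ E]

/-- The slab of half-width `w` about the hyperplane orthogonal to `x`; everything if `x = 0`. -/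
def orthogonalSlab (x : E) (w : ℝ) : Set E :=
  {y | |⟪x, y⟫| ≤ w * ‖x‖}

/-- The cone of vectors whose angle with `x` has cosine at least `ε`, written without division so
that it contains the origin. -/
def circularCone (x : E) (ε : ℝ) : Set E :=
  {y | ε * (‖x‖ * ‖y‖) ≤ ⟪x, y⟫}

theorem smul_mem_circularCone {x y : E} {ε t : ℝ} (ht : 0 ≤ t) (hy : y ∈ circularCone x ε) :
    t • y ∈ circularCone x ε := by
  have hy' : ε * (‖x‖ * ‖y‖) ≤ ⟪x, y⟫ := hy
  calc ε * (‖x‖ * ‖t • y‖) = t * (ε * (‖x‖ * ‖y‖)) := by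
        rw [norm_smul, Real.norm_of_nonneg ht]; ring
    _ ≤ t * ⟪x, y⟫ := by gcongr
    _ = ⟪x, t • y⟫ := (real_inner_smul_right x y t).symm

theorem add_sq_lt_norm_add_sq {x y : E} {ρ₁ ρ₂ ε : ℝ} (hε : 0 ≤ ε) (hε1 : ε ≤ 1) (hρ₂ : 0 ≤ ρ₂)
    (hρ : ρ₂ ≤ ρ₁) (hx : x ∈ outerShell E ρ₁ (ε * ρ₂ / 4)) (hy : y ∈ outerShell E ρ₂ (ε * ρ₂ / 4))
    (hxy : y ∈ circularCone x ε) : ρ₁ ^ 2 + ρ₂ ^ 2 < ‖x + y‖ ^ 2 := by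
  have hερ₂ : ε * ρ₂ ≤ ρ₂ := mul_le_of_le_one_left hρ₂ hε1
  have hx' : ρ₁ - ε * ρ₂ / 4 < ‖x‖ := (mem_outerShell.mp hx).2
  have hy' : ρ₂ - ε * ρ₂ / 4 < ‖y‖ := (mem_outerShell.mp hy).2
  have hxsq : (ρ₁ - ε * ρ₂ / 4) ^ 2 < ‖x‖ ^ 2 := by
    gcongr
    linarith
  have hysq : (ρ₂ - ε * ρ₂ / 4) ^ 2 < ‖y‖ ^ 2 := by
    gcongr
    linarith
  have hloss : ε * ρ₂ * ρ₂ ≤ ε * ρ₂ * ρ₁ := by gcongr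
  have hgain : ε * ρ₂ * ρ₁ ≤ 2 * ⟪x, y⟫ :=
    calc ε * ρ₂ * ρ₁ ≤ 2 * (ε * (3 / 4 * ρ₁ * (3 / 4 * ρ₂))) := by
          have : 0 ≤ ε * ρ₂ * ρ₁ := mul_nonneg (mul_nonneg hε hρ₂) (hρ₂.trans hρ)
          linarith
      _ ≤ 2 * (ε * (‖x‖ * ‖y‖)) := by gcongr <;> linarith
      _ ≤ 2 * ⟪x, y⟫ := by gcongr; exact hxy
  rw [norm_add_sq_real]
  linarith [sq_nonneg (ε * ρ₂)]

variable [FiniteDimensional ℝ E]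

theorem exists_linearMap_stretch {x : E} (hx : x ≠ 0) (k : ℝ) :
    ∃ T : E →ₗ[ℝ] E, LinearMap.det T = k ∧
      ∀ y, ‖T y‖ ^ 2 = ‖y‖ ^ 2 + (k ^ 2 - 1) * (⟪x, y⟫ / ‖x‖) ^ 2 := by
  have hx0 : ‖x‖ ≠ 0 := norm_ne_zero_iff.mpr hx
  refine ⟨LinearMap.transvection (((k - 1) / ‖x‖ ^ 2) • (innerSL ℝ x).toLinearMap) x, ?_,
    fun y ↦ ?_⟩
  · simp [LinearMap.transvection.det, hx0]
  · simp only [LinearMap.transvection.apply, LinearMap.smul_apply, ContinuousLinearMap.coe_coe,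
      innerSL_apply_apply, smul_eq_mul]
    rw [norm_add_sq_real, norm_smul, inner_smul_right, real_inner_comm, mul_pow, Real.norm_eq_abs,
      sq_abs]
    field_simp
    ring

variable [MeasurableSpace E] [BorelSpace E] (μ : Measure E) [μ.IsAddHaarMeasure]

theorem mul_measureReal_orthogonalSlab_inter_closedBall_le {x : E} (hx : x ≠ 0) {k : ℝ}
    (hk : 1 ≤ k) (r w : ℝ) :
    k * μ.real (orthogonalSlab x w ∩ closedBall 0 r) ≤
      μ.real (closedBall 0 √(r ^ 2 + (k ^ 2 - 1) * w ^ 2)) := by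
  obtain ⟨T, hdet, hnorm⟩ := exists_linearMap_stretch hx k
  have himage : μ.real (T '' (orthogonalSlab x w ∩ closedBall 0 r)) =
      k * μ.real (orthogonalSlab x w ∩ closedBall 0 r) := by
    rw [measureReal_def, Measure.addHaar_image_linearMap, hdet, ENNReal.toReal_mul,
      abs_of_nonneg (by linarith), ENNReal.toReal_ofReal (by linarith), measureReal_def]
  rw [← himage]
  refine measureReal_mono ?_ measure_closedBall_lt_top.ne
  rintro _ ⟨y, ⟨hyslab, hyr⟩, rfl⟩
  rw [mem_closedBall_zero_iff] at hyr ⊢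
  have hw : |⟪x, y⟫ / ‖x‖| ≤ w := by
    rw [abs_div, abs_norm]
    exact (div_le_iff₀ (norm_pos_iff.mpr hx)).mpr hyslab
  have hk2 : 0 ≤ k ^ 2 - 1 := by nlinarith
  refine Real.le_sqrt_of_sq_le ?_
  rw [hnorm, ← sq_abs (⟪x, y⟫ / ‖x‖)]
  gcongr

theorem measureReal_orthogonalSlab_inter_closedBall_le {x : E} (hx : x ≠ 0) {r : ℝ} (hr : 0 ≤ r) :
    μ.real (orthogonalSlab x (thresholdCosine (finrank ℝ E) * r) ∩ closedBall 0 r) ≤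
      1 / 2 * μ.real (closedBall 0 r) := by
  set n := finrank ℝ E
  have hradius : √(r ^ 2 + (4 ^ 2 - 1) * (thresholdCosine n * r) ^ 2) ≤ √(1 + (n : ℝ)⁻¹) * r := by
    rw [Real.sqrt_le_left (by positivity), mul_pow, mul_pow, Real.sq_sqrt (by positivity),
      thresholdCosine_sq]
    have : 0 ≤ (n : ℝ)⁻¹ * r ^ 2 := by positivity
    linarith
  have hball : μ.real (closedBall 0 (√(1 + (n : ℝ)⁻¹) * r)) ≤ 2 * μ.real (closedBall 0 r) := by
    rw [measureReal_def, Measure.addHaar_closedBall_mul μ 0 (Real.sqrt_nonneg _) hr,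
      ENNReal.toReal_mul, ENNReal.toReal_ofReal (by positivity), ← measureReal_def]
    gcongr
    exact sqrt_one_add_inv_pow_le_two n
  have hstretch : 4 * μ.real (orthogonalSlab x (thresholdCosine n * r) ∩ closedBall 0 r) ≤
      2 * μ.real (closedBall 0 r) :=
    (mul_measureReal_orthogonalSlab_inter_closedBall_le μ hx (by norm_num) r _).trans
      ((measureReal_mono (closedBall_subset_closedBall hradius)
        measure_closedBall_lt_top.ne).trans hball)
  linarith

theorem measureReal_closedBall_le_two_mul_circularCone_add_orthogonalSlab (x : E) {ε : ℝ}
    (hε : 0 ≤ ε) (r : ℝ) :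
    μ.real (closedBall 0 r) ≤ 2 * μ.real (circularCone x ε ∩ closedBall 0 r) +
      μ.real (orthogonalSlab x (ε * r) ∩ closedBall 0 r) := by
  set K := circularCone x ε ∩ closedBall 0 r
  set S := orthogonalSlab x (ε * r) ∩ closedBall 0 r
  have hcover : closedBall 0 r ⊆ K ∪ -K ∪ S := by
    intro y hy
    have hyr : ‖y‖ ≤ r := mem_closedBall_zero_iff.mp hy
    by_cases hpos : ε * (‖x‖ * ‖y‖) ≤ ⟪x, y⟫
    · exact .inl (.inl ⟨hpos, hy⟩)
    by_cases hneg : ε * (‖x‖ * ‖y‖) ≤ -⟪x, y⟫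
    · exact .inl (.inr ⟨by simpa [circularCone] using hneg, by simpa using hyr⟩)
    refine .inr ⟨?_, hy⟩
    calc |⟪x, y⟫| ≤ ε * (‖x‖ * ‖y‖) := abs_le.mpr ⟨by linarith, by linarith⟩
      _ ≤ ε * (‖x‖ * r) := by gcongr
      _ = ε * r * ‖x‖ := by ring
  have hneg : μ.real (-K) = μ.real K := by
    rw [measureReal_def, Measure.measure_neg, measureReal_def]
  have hKfin : μ K ≠ ⊤ := measure_ne_top_of_subset inter_subset_right measure_closedBall_lt_top.ne
  have hSfin : μ S ≠ ⊤ := measure_ne_top_of_subset inter_subset_right measure_closedBall_lt_top.ne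
  have hnegfin : μ (-K) ≠ ⊤ := by rwa [Measure.measure_neg]
  calc μ.real (closedBall 0 r) ≤ μ.real (K ∪ -K ∪ S) :=
        measureReal_mono hcover (measure_union_ne_top (measure_union_ne_top hKfin hnegfin) hSfin)
    _ ≤ μ.real K + μ.real (-K) + μ.real S :=
        (measureReal_union_le _ _).trans (by gcongr; exact measureReal_union_le _ _)
    _ = 2 * μ.real K + μ.real S := by rw [hneg]; ring

theorem le_measureReal_circularCone_inter_closedBall {x : E} (hx : x ≠ 0) {r : ℝ} (hr : 0 ≤ r) :
    1 / 4 * μ.real (closedBall 0 r) ≤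
      μ.real (circularCone x (thresholdCosine (finrank ℝ E)) ∩ closedBall 0 r) := by
  have hcover := measureReal_closedBall_le_two_mul_circularCone_add_orthogonalSlab μ x
    (thresholdCosine_nonneg (finrank ℝ E)) r
  have hslab := measureReal_orthogonalSlab_inter_closedBall_le μ hx hr
  linarith

theorem le_measureReal_circularCone_inter_outerShell {x : E} (hx : x ≠ 0) {r w : ℝ} (hw : 0 ≤ w)
    (hwr : w < r) :
    min (finrank ℝ E * (w / r)) 1 / 2 * (1 / 4 * μ.real (closedBall 0 r)) ≤
      μ.real (circularCone x (thresholdCosine (finrank ℝ E)) ∩ outerShell E r w) := by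
  have hr : 0 < r := hw.trans_lt hwr
  refine le_trans ?_ (le_measureReal_inter_outerShell μ
    (fun t ht y hy ↦ smul_mem_circularCone (zero_le_one.trans ht) hy) hw hwr)
  gcongr
  exact le_measureReal_circularCone_inter_closedBall μ hx hr.le

end SlabsAndCones

section LongSums

open Module Metric Set
open scoped RealInnerProductSpace

variable {E : Type*} [NormedAddCommGroup E] [InnerProductSpace ℝ E]

/-- The pairs of vectors in the outer shells of thickness `w` of the balls of radii `ρ₁` and `ρ₂`
whose angle has cosine at least `ε`. -/
def acuteShellPairs (E : Type*) [NormedAddCommGroup E] [InnerProductSpace ℝ E] (ρ₁ ρ₂ w ε : ℝ) :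
    Set (E × E) :=
  {p | p.1 ∈ outerShell E ρ₁ w ∧ p.2 ∈ circularCone p.1 ε ∩ outerShell E ρ₂ w}

theorem acuteShellPairs_subset_closedBall_prod (ρ₁ ρ₂ w ε : ℝ) :
    acuteShellPairs E ρ₁ ρ₂ w ε ⊆ closedBall 0 ρ₁ ×ˢ closedBall 0 ρ₂ :=
  fun _ ⟨hx, _, hy⟩ ↦ ⟨outerShell_subset_closedBall _ _ hx, outerShell_subset_closedBall _ _ hy⟩

theorem setOf_norm_add_le_subset {ρ₁ ρ₂ R ε : ℝ} (hε : 0 ≤ ε) (hε1 : ε ≤ 1) (hρ₂ : 0 ≤ ρ₂)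
    (hρ : ρ₂ ≤ ρ₁) (hR : R ≤ √(ρ₁ ^ 2 + ρ₂ ^ 2)) :
    {p : E × E | ‖p.1‖ ≤ ρ₁ ∧ ‖p.2‖ ≤ ρ₂ ∧ ‖p.1 + p.2‖ ≤ R} ⊆
      (closedBall 0 ρ₁ ×ˢ closedBall 0 ρ₂) \ acuteShellPairs E ρ₁ ρ₂ (ε * ρ₂ / 4) ε := by
  rintro ⟨x, y⟩ ⟨hx, hy, hxy⟩
  refine ⟨⟨mem_closedBall_zero_iff.mpr hx, mem_closedBall_zero_iff.mpr hy⟩,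
    fun ⟨hxshell, hycone, hyshell⟩ ↦ ?_⟩
  have hlong : √(ρ₁ ^ 2 + ρ₂ ^ 2) < ‖x + y‖ :=
    (Real.sqrt_lt_sqrt (by positivity)
      (add_sq_lt_norm_add_sq hε hε1 hρ₂ hρ hxshell hyshell hycone)).trans_eq
      (Real.sqrt_sq (norm_nonneg _))
  exact (hxy.trans hR).not_gt hlong

variable [FiniteDimensional ℝ E] [MeasurableSpace E] [BorelSpace E]

theorem measurableSet_acuteShellPairs (ρ₁ ρ₂ w ε : ℝ) :
    MeasurableSet (acuteShellPairs E ρ₁ ρ₂ w ε) := by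
  have hcone : MeasurableSet {p : E × E | ε * (‖p.1‖ * ‖p.2‖) ≤ ⟪p.1, p.2⟫} :=
    measurableSet_le (by fun_prop) (by fun_prop)
  exact (measurable_fst (measurableSet_outerShell ρ₁ w)).inter
    (hcone.inter (measurable_snd (measurableSet_outerShell ρ₂ w)))

variable (μ : Measure E) [μ.IsAddHaarMeasure]

theorem le_measureReal_acuteShellPairs {ρ₁ ρ₂ w : ℝ} (hw : 0 ≤ w) (hw₁ : w < ρ₁) (hw₂ : w < ρ₂) :
    min (finrank ℝ E * (w / ρ₂)) 1 / 2 * (1 / 4 * μ.real (closedBall 0 ρ₂)) *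
        (min (finrank ℝ E * (w / ρ₁)) 1 / 2 * μ.real (closedBall 0 ρ₁)) ≤
      (μ.prod μ).real (acuteShellPairs E ρ₁ ρ₂ w (thresholdCosine (finrank ℝ E))) := by
  have hρ₂ : 0 < ρ₂ := hw.trans_lt hw₂
  refine le_trans (mul_le_mul_of_nonneg_left (le_measureReal_outerShell μ hw hw₁) (by positivity))
    (mul_measureReal_le_measureReal_prod μ μ (measurableSet_acuteShellPairs _ _ _ _)
      (measure_ne_top_of_subset (acuteShellPairs_subset_closedBall_prod _ _ _ _)
        (measure_closedBall_prod_closedBall_ne_top μ μ 0 0 ρ₁ ρ₂)) (measurableSet_outerShell ρ₁ w)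
      fun x hx ↦ ?_)
  have hx0 : x ≠ 0 := norm_pos_iff.mp ((sub_pos.mpr hw₁).trans (mem_outerShell.mp hx).2)
  have hsection : Prod.mk x ⁻¹' acuteShellPairs E ρ₁ ρ₂ w (thresholdCosine (finrank ℝ E)) =
      circularCone x (thresholdCosine (finrank ℝ E)) ∩ outerShell E ρ₂ w := by
    ext y
    simp [acuteShellPairs, hx]
  rw [hsection]
  exact le_measureReal_circularCone_inter_outerShell μ hx0 hw hw₂

theorem min_one_mul_le_measureReal_acuteShellPairs {ρ₁ ρ₂ : ℝ} (hρ₂ : 0 < ρ₂) (hρ : ρ₂ ≤ ρ₁) :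
    1 / 4096 * min (ρ₂ / ρ₁ * √(finrank ℝ E)) 1 *
        (μ.real (closedBall 0 ρ₁) * μ.real (closedBall 0 ρ₂)) ≤
      (μ.prod μ).real (acuteShellPairs E ρ₁ ρ₂ (thresholdCosine (finrank ℝ E) * ρ₂ / 4)
        (thresholdCosine (finrank ℝ E))) := by
  set n := finrank ℝ E
  set w : ℝ := thresholdCosine n * ρ₂ / 4 with hw
  have hw0 : 0 ≤ w := by
    have := thresholdCosine_nonneg n
    positivity
  have hwρ₂ : w < ρ₂ := by
    have := mul_le_of_le_one_left hρ₂.le (thresholdCosine_le_one n)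
    linarith
  calc 1 / 4096 * min (ρ₂ / ρ₁ * √n) 1 * (μ.real (closedBall 0 ρ₁) * μ.real (closedBall 0 ρ₂))
      ≤ 1 / 4096 * (256 * (min (n * (w / ρ₁)) 1 * min (n * (w / ρ₂)) 1)) *
          (μ.real (closedBall 0 ρ₁) * μ.real (closedBall 0 ρ₂)) := by
        gcongr
        exact min_one_le_mul_min_mul_min_thresholdCosine (hρ₂.trans_le hρ) hρ₂ n
    _ = min (n * (w / ρ₂)) 1 / 2 * (1 / 4 * μ.real (closedBall 0 ρ₂)) *
          (min (n * (w / ρ₁)) 1 / 2 * μ.real (closedBall 0 ρ₁)) := by ring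
    _ ≤ _ := le_measureReal_acuteShellPairs μ hw0 (hwρ₂.trans_le hρ) hwρ₂

end LongSums

open Module in
theorem volume_theta_upper_bound_general_general {E : Type*} [NormedAddCommGroup E]
    [InnerProductSpace ℝ E] [FiniteDimensional ℝ E] [MeasurableSpace E] [BorelSpace E]
    (μ : Measure E) [μ.IsAddHaarMeasure] {ρ₁ ρ₂ R : ℝ} (hρ₂ : 0 < ρ₂) (hρ : ρ₂ ≤ ρ₁)
    (hR : R ≤ √(ρ₁ ^ 2 + ρ₂ ^ 2)) :
    μ.prod μ {p : E × E | ‖p.1‖ ≤ ρ₁ ∧ ‖p.2‖ ≤ ρ₂ ∧ ‖p.1 + p.2‖ ≤ R} ≤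
      ENNReal.ofReal (1 - 1 / 4096 * min (ρ₂ / ρ₁ * √(finrank ℝ E)) 1) *
        (μ (Metric.closedBall 0 ρ₁) * μ (Metric.closedBall 0 ρ₂)) := by
  set ε := thresholdCosine (finrank ℝ E)
  set B := Metric.closedBall (0 : E) ρ₁ ×ˢ Metric.closedBall (0 : E) ρ₂
  have hBfin : μ.prod μ B ≠ ⊤ := measure_closedBall_prod_closedBall_ne_top μ μ 0 0 ρ₁ ρ₂
  have hsub := setOf_norm_add_le_subset (E := E) (thresholdCosine_nonneg (finrank ℝ E))
    (thresholdCosine_le_one _) hρ₂.le hρ hR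
  rw [← Measure.prod_prod]
  refine measure_le_ofReal_mul_of_measureReal_le
    (measure_ne_top_of_subset (hsub.trans Set.sdiff_subset) hBfin) hBfin ?_
  have hpairs := min_one_mul_le_measureReal_acuteShellPairs μ hρ₂ hρ
  have hB : (μ.prod μ).real B = _ := measureReal_prod_prod _ _
  calc _ ≤ (μ.prod μ).real (B \ acuteShellPairs E ρ₁ ρ₂ (ε * ρ₂ / 4) ε) :=
        measureReal_mono hsub (measure_ne_top_of_subset Set.sdiff_subset hBfin)
    _ = (μ.prod μ).real B - (μ.prod μ).real (acuteShellPairs E ρ₁ ρ₂ (ε * ρ₂ / 4) ε) :=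
        measureReal_sdiff (acuteShellPairs_subset_closedBall_prod _ _ _ _)
          (measurableSet_acuteShellPairs _ _ _ _) hBfin
    _ ≤ _ := by rw [← hB] at hpairs; linarith


/-- The general-radii form of Lemma 1.3: for `ρ₁ ≥ ρ₂ > 0`, `ρ = ρ₂/ρ₁`, and
`R < (ρ₁² + ρ₂²)^{1/2}`, the set of pairs `(x, y)` with `|x| ≤ ρ₁`, `|y| ≤ ρ₂`,
`|x + y| ≤ R` occupies a proportion at most `1 - c·min{ρ√n, 1}` of
`ρ₁Bⁿ × ρ₂Bⁿ`. -/
theorem volume_theta_upper_bound_general :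
    ∃ c : ℝ, 0 < c ∧
      ∀ (n : ℕ), 0 < n →
      ∀ (ρ₁ ρ₂ : ℝ), 0 < ρ₂ → ρ₂ ≤ ρ₁ →
      ∀ (R : ℝ), 0 < R → R < Real.sqrt (ρ₁ ^ 2 + ρ₂ ^ 2) →
        volume {p : EuclideanSpace ℝ (Fin n) × EuclideanSpace ℝ (Fin n) |
            ‖p.1‖ ≤ ρ₁ ∧ ‖p.2‖ ≤ ρ₂ ∧ ‖p.1 + p.2‖ ≤ R}
          ≤ ENNReal.ofReal (1 - c * min (ρ₂ / ρ₁ * Real.sqrt n) 1) *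
            (volume (Metric.closedBall (0 : EuclideanSpace ℝ (Fin n)) ρ₁) *
              volume (Metric.closedBall (0 : EuclideanSpace ℝ (Fin n)) ρ₂)) := by
  refine ⟨1 / 4096, by norm_num, fun n _ ρ₁ ρ₂ hρ₂ hρ R _ hR ↦ ?_⟩
  simpa only [finrank_euclideanSpace_fin] using! volume_theta_upper_bound_general_general
    (volume : Measure (EuclideanSpace ℝ (Fin n))) hρ₂ hρ hR.le
end
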